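/- Let a, b be finite tuples from L, let p be a Kolchin polynomial of (a,b) over K, q a Kolchin polynomial of a over K, and r a Kolchin polynomial of b over K⟨a⟩. If deg q = deg r, then deg p = deg q and the typical differential dimensions add: (deg p)!·leadingCoeff(p) = (deg q)!·leadingCoeff(q) + (deg r)!·leadingCoeff(r), i.e., α((a,b)/K) = α(a/K) + α(b/K⟨a⟩). -/

import Mathlib

open Polynomial

/-- Iterated application of the derivations `δ` according to the multi-exponent `e`:
`x ↦ δ₁^[e 1] (δ₂^[e 2] (⋯ (δ_m^[e m] x)))`. -/
def thetaApply {L : Type*} {m : ℕ} (δ : Fin m → L → L) (e : Fin m → ℕ) : L → L :=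
  (List.ofFn (fun i => (δ i)^[e i])).foldr (· ∘ ·) id

/-- A subfield of `L` is a differential subfield if it is closed under each derivation. -/
def IsDiffSubfield {L : Type*} [Field L] {m : ℕ} (δ : Fin m → L → L) (K : Subfield L) : Prop :=
  ∀ i : Fin m, ∀ x ∈ K, δ i x ∈ K

/-- The transcendence degree (as a natural number) of an intermediate field over the base. -/
noncomputable def trdegNat {L : Type*} [Field L] (K : Subfield L) (E : IntermediateField K L) : ℕ :=
  (⨆ s : {s : Set E // AlgebraicIndependent K ((↑) : s → E)}, Cardinal.mk s.1).toNat

/-- `T_{η/K}(s)`: the transcendence degree over `K` of the subfield of `L` generated by `K`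
together with all `δ₁^(e 1) ⋯ δ_m^(e m) (η j)` with `e 1 + ⋯ + e m ≤ s`. -/
noncomputable def diffTrdeg {L : Type*} [Field L] {m n : ℕ} (δ : Fin m → L → L) (K : Subfield L)
    (η : Fin n → L) (s : ℕ) : ℕ :=
  trdegNat K (IntermediateField.adjoin K
    {x : L | ∃ e : Fin m → ℕ, (∑ i, e i) ≤ s ∧ ∃ j : Fin n, x = thetaApply δ e (η j)})

/-- `p` is a Kolchin polynomial of `η` over `K` if `p(s) = T_{η/K}(s)` for all large `s`. -/
def IsKolchinPoly {L : Type*} [Field L] {m n : ℕ} (δ : Fin m → L → L) (K : Subfield L)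
    (η : Fin n → L) (p : ℚ[X]) : Prop :=
  ∃ s₀ : ℕ, ∀ s : ℕ, s₀ ≤ s → p.eval (s : ℚ) = (diffTrdeg δ K η s : ℚ)

/-- `K⟨S⟩`: the smallest differential subfield of `L` containing `K` and `S`. -/
def diffAdjoin {L : Type*} [Field L] {m : ℕ} (δ : Fin m → L → L) (K : Subfield L)
    (S : Set L) : Subfield L :=
  sInf {F : Subfield L | IsDiffSubfield δ F ∧ K ≤ F ∧ S ⊆ F}

section Matroid

open AlgebraicIndependent

variable {L : Type*} [Field L]

theorem isAlgebraic_subfield_iff {G : Subfield L} {x : L} :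
    IsAlgebraic G x ↔ ∃ f : L[X], f ≠ 0 ∧ (∀ i, f.coeff i ∈ G) ∧ f.eval x = 0 := by
  constructor
  · rintro ⟨f, hf, hx⟩
    refine ⟨f.map (algebraMap G L), (Polynomial.map_ne_zero_iff Subtype.val_injective).2 hf,
      fun i => ?_, ?_⟩
    · rw [coeff_map]
      exact (f.coeff i).2
    · rwa [eval_map_algebraMap]
  · rintro ⟨f, hf, hG, hx⟩
    have hl : f ∈ lifts (algebraMap G L) :=
      (lifts_iff_coeff_lifts f).2 fun i => ⟨⟨_, hG i⟩, rfl⟩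
    obtain ⟨g, rfl⟩ := (mem_lifts f).1 hl
    refine ⟨g, ?_, ?_⟩
    · rintro rfl
      simp at hf
    · rwa [eval_map_algebraMap] at hx

theorem isAlgebraic_subfield_mono {G H : Subfield L} (h : G ≤ H) {x : L}
    (hx : IsAlgebraic G x) : IsAlgebraic H x := by
  rw [isAlgebraic_subfield_iff] at hx ⊢
  obtain ⟨f, hf, hG, hx⟩ := hx
  exact ⟨f, hf, fun i => h (hG i), hx⟩

theorem adjoin_toSubfield_eq_closure (K : Subfield L) (S : Set L) :
    (IntermediateField.adjoin K S).toSubfield = Subfield.closure ((K : Set L) ∪ S) := by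
  have hr : Set.range (algebraMap K L) = K := Subtype.range_coe
  rw [IntermediateField.adjoin_toSubfield, hr]

open scoped IntermediateField.algebraAdjoinAdjoin in
theorem mem_matroid_closure_iff {K : Subfield L} {S : Set L} {x : L} :
    x ∈ (matroid K L).closure S ↔ IsAlgebraic (Subfield.closure ((K : Set L) ∪ S)) x := by
  rw [matroid_closure_eq, SetLike.mem_coe, Subalgebra.mem_algebraicClosure,
    ← adjoin_toSubfield_eq_closure,
    IsFractionRing.isAlgebraic_iff (Algebra.adjoin K S) (IntermediateField.adjoin K S) L]
  rfl

theorem matroid_closure_subset_of_le {K F : Subfield L} {S T : Set L}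
    (hKF : K ≤ Subfield.closure ((F : Set L) ∪ T))
    (hST : S ⊆ Subfield.closure ((F : Set L) ∪ T)) :
    (matroid K L).closure S ⊆ (matroid F L).closure T := by
  intro x hx
  rw [mem_matroid_closure_iff] at hx ⊢
  exact isAlgebraic_subfield_mono (Subfield.closure_le.2 (Set.union_subset hKF hST)) hx

theorem trdegNat_adjoin_eq_eRk (K : Subfield L) {S : Set L} (hS : S.Finite) :
    (trdegNat K (IntermediateField.adjoin K S) : ℕ∞) = (matroid K L).eRk S := by
  obtain ⟨I, hI⟩ := (matroid K L).exists_isBasis S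
  have hIS := hI.subset
  set E := IntermediateField.adjoin K S
  have hSE : S ⊆ E := IntermediateField.subset_adjoin K S
  have hEcl : (E : Set L) ⊆ (matroid K L).closure I := by
    intro x hx
    rw [hI.closure_eq_closure, mem_matroid_closure_iff, ← adjoin_toSubfield_eq_closure]
    exact isAlgebraic_algebraMap (⟨x, hx⟩ : (IntermediateField.adjoin K S).toSubfield)
  let x : I → E := fun i => ⟨i, hSE (hIS i.2)⟩
  have hx : IsTranscendenceBasis K x := by
    refine ⟨?_, fun s hs hxs => ?_⟩
    · have h : AlgebraicIndependent K (E.val ∘ x) := hI.indep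
      exact h.of_comp
    · have hJ : (matroid K L).Indep (Subtype.val '' s) := by
        have := hs.map' (f := E.val) Subtype.val_injective
        rw [matroid_indep_iff]
        exact this.image
      have hIJ : I ⊆ Subtype.val '' s := fun i hi => ⟨x ⟨i, hi⟩, hxs ⟨_, rfl⟩, rfl⟩
      have hJI : Subtype.val '' s = I := by
        refine (hI.indep.isBasis_closure.eq_of_subset_indep hJ hIJ ?_).symm
        rintro _ ⟨y, _, rfl⟩
        exact hEcl y.2
      refine hxs.antisymm fun y hy => ?_
      have : (y : L) ∈ I := hJI ▸ ⟨y, hy, rfl⟩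
      exact ⟨⟨y, this⟩, rfl⟩
  have hcard : trdegNat K E = Cardinal.toNat (Cardinal.mk I) := by
    have := hx.cardinalMk_eq_trdeg
    rw [this]
    rfl
  rw [hcard, hI.eRk_eq_encard, ← (hS.subset hIS).cast_ncard_eq, ← Nat.card_coe_set_eq, Nat.card]

end Matroid

section Derivation

open AlgebraicIndependent

variable {L : Type*} [Field L]

/-- The elements of a subfield `E` whose image under the derivation `D` also lies in `E`. -/
def derivPreimage (D : Derivation ℤ L L) (E : Subfield L) : Subfield L where
  carrier := {y | y ∈ E ∧ D y ∈ E}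
  mul_mem' {x y} hx hy := by
    refine ⟨E.mul_mem hx.1 hy.1, ?_⟩
    rw [D.leibniz, smul_eq_mul, smul_eq_mul]
    exact E.add_mem (E.mul_mem hx.1 hy.2) (E.mul_mem hy.1 hx.2)
  one_mem' := ⟨E.one_mem, by rw [D.map_one_eq_zero]; exact E.zero_mem⟩
  add_mem' {x y} hx hy := ⟨E.add_mem hx.1 hy.1, by rw [D.map_add]; exact E.add_mem hx.2 hy.2⟩
  zero_mem' := ⟨E.zero_mem, by rw [D.map_zero]; exact E.zero_mem⟩
  neg_mem' {x} hx := ⟨E.neg_mem hx.1, by rw [D.map_neg]; exact E.neg_mem hx.2⟩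
  inv_mem' x hx := by
    refine ⟨E.inv_mem hx.1, ?_⟩
    rw [D.leibniz_inv, smul_eq_mul]
    exact E.mul_mem (E.neg_mem (E.pow_mem (E.inv_mem hx.1) 2)) hx.2

theorem derivation_aeval_sub_mem {D : Derivation ℤ L L} {E G : Subfield L}
    (hG : G ≤ derivPreimage D E) {x : L} (hx : x ∈ E) (f : G[X]) :
    D (aeval x f) - aeval x (derivative f) * D x ∈ E := by
  induction f using Polynomial.induction_on' with
  | add f g hf hg =>
    have : D (aeval x (f + g)) - aeval x (derivative (f + g)) * D x =
        (D (aeval x f) - aeval x (derivative f) * D x) +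
          (D (aeval x g) - aeval x (derivative g) * D x) := by
      simp only [map_add]
      ring
    rw [this]
    exact E.add_mem hf hg
  | monomial n c =>
    have : D (aeval x (monomial n c)) - aeval x (derivative (monomial n c)) * D x =
        x ^ n * D (c : L) := by
      rw [derivative_monomial, aeval_monomial, aeval_monomial, D.leibniz, D.leibniz_pow]
      simp only [smul_eq_mul, nsmul_eq_mul, map_mul, map_natCast]
      change _ + _ * D (c : L) - (c : L) * _ * _ * _ = _
      change (c : L) * _ + _ - _ = _
      ring
    rw [this]
    exact E.mul_mem (E.pow_mem hx n) (hG c.2).2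

theorem derivation_mem_of_isAlgebraic [CharZero L] {D : Derivation ℤ L L} {E G : Subfield L}
    (hE : ∀ x, IsAlgebraic E x → x ∈ E) (hG : G ≤ derivPreimage D E) {x : L}
    (hx : IsAlgebraic G x) : D x ∈ E := by
  have hGE : G ≤ E := fun y hy => (hG hy).1
  have hxE : x ∈ E := hE x (isAlgebraic_subfield_mono hGE hx)
  have h := derivation_aeval_sub_mem hG hxE (minpoly G x)
  rw [minpoly.aeval, D.map_zero, zero_sub] at h
  have hne : aeval x (derivative (minpoly G x)) ≠ 0 :=
    (minpoly.irreducible hx.isIntegral).separable.aeval_derivative_ne_zero (minpoly.aeval G x)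
  have hmem : aeval x (derivative (minpoly G x)) ∈ E := by
    rw [aeval_eq_sum_range]
    exact E.sum_mem fun i _ => E.mul_mem (hGE (coeff (derivative (minpoly G x)) i).2) (E.pow_mem hxE i)
  have := E.mul_mem (E.inv_mem hmem) (E.neg_mem h)
  rwa [neg_neg, inv_mul_cancel_left₀ hne] at this

theorem derivation_mem_matroid_closure [CharZero L] {D : Derivation ℤ L L} {K : Subfield L}
    (hK : ∀ x ∈ K, D x ∈ K) {S T : Set L} (hST : S ⊆ (matroid K L).closure T)
    (hDST : ∀ x ∈ S, D x ∈ (matroid K L).closure T) {x : L}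
    (hx : x ∈ (matroid K L).closure S) : D x ∈ (matroid K L).closure T := by
  set F := Subfield.closure ((K : Set L) ∪ T)
  set E : Subfield L := (algebraicClosure F L).toSubfield
  have hE : ∀ y, y ∈ E ↔ y ∈ (matroid K L).closure T := fun y => by
    rw [mem_matroid_closure_iff]
    exact mem_algebraicClosure_iff
  have hKE : K ≤ E := fun y hy => by
    rw [hE, mem_matroid_closure_iff]
    exact isAlgebraic_algebraMap (⟨y, Subfield.subset_closure (Or.inl hy)⟩ : F)
  rw [← hE]
  refine derivation_mem_of_isAlgebraic (fun y hy => ?_) ?_ (mem_matroid_closure_iff.1 hx)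
  · have hy' : IsAlgebraic (algebraicClosure F L) y := hy
    exact mem_algebraicClosure_iff.2 (hy'.restrictScalars F)
  · refine Subfield.closure_le.2 (Set.union_subset (fun y hy => ?_) fun y hy => ?_)
    · exact ⟨hKE hy, hKE (hK y hy)⟩
    · exact ⟨(hE y).2 (hST hy), (hE _).2 (hDST y hy)⟩

end Derivation

section Theta

variable {L : Type*}

theorem thetaApply_succ {m : ℕ} (δ : Fin (m + 1) → L → L) (e : Fin (m + 1) → ℕ) (x : L) :
    thetaApply δ e x =
      (δ 0)^[e 0] (thetaApply (fun i => δ i.succ) (fun i => e i.succ) x) := by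
  simp [thetaApply, List.ofFn_succ]

theorem thetaApply_zero {m : ℕ} (δ : Fin m → L → L) (x : L) : thetaApply δ 0 x = x := by
  induction m with
  | zero => simp [thetaApply]
  | succ m ih =>
    rw [thetaApply_succ]
    exact ih _

theorem thetaApply_add_single {m : ℕ} {δ : Fin m → L → L}
    (hcomm : ∀ i j x, δ i (δ j x) = δ j (δ i x)) (e : Fin m → ℕ) (i : Fin m) (x : L) :
    thetaApply δ (e + Pi.single i 1) x = δ i (thetaApply δ e x) := by
  induction m with
  | zero => exact i.elim0
  | succ m ih =>
    rw [thetaApply_succ, thetaApply_succ δ e]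
    cases i using Fin.cases with
    | zero =>
      rw [← Function.iterate_succ_apply' (δ 0)]
      congr 2
    | succ i =>
      have h0 : (e + Pi.single i.succ 1 : Fin (m + 1) → ℕ) 0 = e 0 := by simp
      have hs : (fun j : Fin m => (e + Pi.single i.succ 1 : Fin (m + 1) → ℕ) j.succ) =
          (fun j => e j.succ) + Pi.single i 1 := by
        funext j
        simp [Pi.single_apply]
      rw [h0, hs, ih (δ := fun i => δ i.succ) (fun i j x => hcomm _ _ x)]
      exact (Function.Commute.iterate_left (hcomm 0 i.succ) (e 0)) _

/-- The set of all `δ₁^(e 1) ⋯ δ_m^(e m) (η j)` with `e 1 + ⋯ + e m ≤ s`. -/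
def thetaSet {m n : ℕ} (δ : Fin m → L → L) (η : Fin n → L) (s : ℕ) : Set L :=
  {x : L | ∃ e : Fin m → ℕ, (∑ i, e i) ≤ s ∧ ∃ j : Fin n, x = thetaApply δ e (η j)}

variable {m n : ℕ} {δ : Fin m → L → L} {η : Fin n → L}

theorem finite_setOf_sum_le (s : ℕ) : {e : Fin m → ℕ | ∑ i, e i ≤ s}.Finite :=
  (Set.finite_Iic (fun _ : Fin m => s)).subset fun _ he i =>
    (Finset.single_le_sum (fun _ _ => Nat.zero_le _) (Finset.mem_univ i)).trans he

theorem thetaSet_finite (s : ℕ) : (thetaSet δ η s).Finite := by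
  refine (((finite_setOf_sum_le s).prod (Set.finite_univ (α := Fin n))).image
    fun ej => thetaApply δ ej.1 (η ej.2)).subset ?_
  rintro _ ⟨e, he, j, rfl⟩
  exact ⟨(e, j), ⟨he, Set.mem_univ _⟩, rfl⟩

theorem thetaSet_mono : Monotone (thetaSet δ η) := by
  rintro s t hst _ ⟨e, he, j, rfl⟩
  exact ⟨e, he.trans hst, j, rfl⟩

theorem thetaSet_append {n' : ℕ} {η' : Fin n' → L} (s : ℕ) :
    thetaSet δ (Fin.append η η') s = thetaSet δ η s ∪ thetaSet δ η' s := by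
  ext x
  constructor
  · rintro ⟨e, he, j, rfl⟩
    cases j using Fin.addCases with
    | left j => exact Or.inl ⟨e, he, j, by rw [Fin.append_left]⟩
    | right j => exact Or.inr ⟨e, he, j, by rw [Fin.append_right]⟩
  · rintro (⟨e, he, j, rfl⟩ | ⟨e, he, j, rfl⟩)
    · exact ⟨e, he, Fin.castAdd n' j, by rw [Fin.append_left]⟩
    · exact ⟨e, he, Fin.natAdd n j, by rw [Fin.append_right]⟩

theorem sum_add_single (e : Fin m → ℕ) (i : Fin m) :
    ∑ k, (e + Pi.single i 1 : Fin m → ℕ) k = ∑ k, e k + 1 := by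
  simp [Finset.sum_add_distrib]

theorem map_mem_thetaSet_succ (hcomm : ∀ i j x, δ i (δ j x) = δ j (δ i x)) (i : Fin m) {s : ℕ}
    {x : L} (hx : x ∈ thetaSet δ η s) : δ i x ∈ thetaSet δ η (s + 1) := by
  obtain ⟨e, he, j, rfl⟩ := hx
  refine ⟨e + Pi.single i 1, ?_, j, (thetaApply_add_single hcomm e i _).symm⟩
  rw [sum_add_single]
  exact Nat.succ_le_succ he

theorem exponent_induction {P : (Fin m → ℕ) → Prop} (zero : P 0)
    (add_single : ∀ e i, P e → P (e + Pi.single i 1)) (e : Fin m → ℕ) : P e := by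
  induction hd : ∑ k, e k generalizing e with
  | zero =>
    have : e = 0 := funext fun i => by
      simpa using (Finset.sum_eq_zero_iff.1 hd) i (Finset.mem_univ i)
    exact this ▸ zero
  | succ d ih =>
    obtain ⟨i, hi⟩ : ∃ i, e i ≠ 0 := by
      by_contra! h
      simp [h] at hd
    have he : e - Pi.single i 1 + Pi.single i 1 = e := by
      refine tsub_add_cancel_of_le fun k => ?_
      rcases eq_or_ne k i with rfl | hk
      · simpa using Nat.one_le_iff_ne_zero.2 hi
      · simp [hk]
    rw [← he] at hd ⊢
    rw [sum_add_single] at hd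
    exact add_single _ _ (ih _ (by omega))

end Theta

section DiffAdjoin

open AlgebraicIndependent

variable {L : Type*} [Field L] {m n : ℕ} {δ : Fin m → L → L} {K : Subfield L} {η : Fin n → L}

theorem diffTrdeg_eq_eRk (s : ℕ) :
    (diffTrdeg δ K η s : ℕ∞) = (matroid K L).eRk (thetaSet δ η s) :=
  trdegNat_adjoin_eq_eRk K (thetaSet_finite s)

theorem isDiffSubfield_diffAdjoin (S : Set L) : IsDiffSubfield δ (diffAdjoin δ K S) := by
  intro i x hx
  rw [diffAdjoin, Subfield.mem_sInf] at hx ⊢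
  exact fun F hF => hF.1 i x (hx F hF)

theorem le_diffAdjoin (S : Set L) : K ≤ diffAdjoin δ K S :=
  le_sInf fun _ hF => hF.2.1

theorem subset_diffAdjoin (S : Set L) : S ⊆ diffAdjoin δ K S := by
  intro x hx
  rw [diffAdjoin, SetLike.mem_coe, Subfield.mem_sInf]
  exact fun F hF => hF.2.2 hx

theorem thetaApply_mem_of_isDiffSubfield (hcomm : ∀ i j x, δ i (δ j x) = δ j (δ i x))
    {F : Subfield L} (hF : IsDiffSubfield δ F) {x : L} (hx : x ∈ F) (e : Fin m → ℕ) :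
    thetaApply δ e x ∈ F := by
  induction e using exponent_induction with
  | zero => rwa [thetaApply_zero]
  | add_single e i ih =>
    rw [thetaApply_add_single hcomm]
    exact hF i _ ih

theorem thetaSet_subset_diffAdjoin (hcomm : ∀ i j x, δ i (δ j x) = δ j (δ i x)) (s : ℕ) :
    thetaSet δ η s ⊆ diffAdjoin δ K (Set.range η) := by
  rintro _ ⟨e, -, j, rfl⟩
  exact thetaApply_mem_of_isDiffSubfield hcomm (isDiffSubfield_diffAdjoin _)
    (subset_diffAdjoin _ (Set.mem_range_self j)) e

/-- A family of functions that are additive and satisfy the Leibniz rule, as derivations. -/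
def toDerivation (δ : Fin m → L → L) (hadd : ∀ i x y, δ i (x + y) = δ i x + δ i y)
    (hleib : ∀ i x y, δ i (x * y) = x * δ i y + δ i x * y) (i : Fin m) : Derivation ℤ L L :=
  Derivation.mk' (AddMonoidHom.mk' (δ i) (hadd i)).toIntLinearMap fun x y => by
    simp [hleib, mul_comm]

theorem diffAdjoin_le_closure (hadd : ∀ i x y, δ i (x + y) = δ i x + δ i y)
    (hleib : ∀ i x y, δ i (x * y) = x * δ i y + δ i x * y)
    (hcomm : ∀ i j x, δ i (δ j x) = δ j (δ i x)) (hK : IsDiffSubfield δ K) :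
    diffAdjoin δ K (Set.range η) ≤ Subfield.closure ((K : Set L) ∪ ⋃ s, thetaSet δ η s) := by
  refine sInf_le ⟨fun i => ?_, fun x hx => Subfield.subset_closure (Or.inl hx), ?_⟩
  · have h : Subfield.closure ((K : Set L) ∪ ⋃ s, thetaSet δ η s) ≤
        derivPreimage (toDerivation δ hadd hleib i)
          (Subfield.closure ((K : Set L) ∪ ⋃ s, thetaSet δ η s)) := by
      refine Subfield.closure_le.2 fun x hx => ⟨Subfield.subset_closure hx,
        Subfield.subset_closure ?_⟩
      rcases hx with hx | hx
      · exact Or.inl (hK i x hx)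
      · obtain ⟨s, hs⟩ := Set.mem_iUnion.1 hx
        exact Or.inr (Set.mem_iUnion.2 ⟨s + 1, map_mem_thetaSet_succ hcomm i hs⟩)
    exact fun x hx => (h hx).2
  · rintro _ ⟨j, rfl⟩
    exact Subfield.subset_closure (Or.inr (Set.mem_iUnion.2
      ⟨0, 0, by simp, j, (thetaApply_zero δ _).symm⟩))

end DiffAdjoin

section Rank

theorem Matroid.indep_image_of_notMem_closure_lt {α ι R : Type*} [LinearOrder R] {M : Matroid α}
    (hM : M.E = Set.univ) {v : ι → α} {rk : ι → R} (hrk : Function.Injective rk) (t : Finset ι)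
    (ht : ∀ i ∈ t, v i ∉ M.closure (v '' {k | rk k < rk i})) :
    M.Indep (v '' t) ∧ (v '' t).encard = t.card := by
  classical
  induction t using Finset.induction_on_max_value rk with
  | empty => simp
  | insert i t hit hmax ih =>
    obtain ⟨h1, h2⟩ := ih fun k hk => ht k (Finset.mem_insert_of_mem hk)
    have hsub : v '' t ⊆ v '' {k | rk k < rk i} := Set.image_mono fun k hk =>
      (hmax k hk).lt_of_ne fun h => hit (hrk h ▸ hk)
    have hi : v i ∉ M.closure (v '' t) := fun h =>
      ht i (Finset.mem_insert_self i t) (M.closure_subset_closure hsub h)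
    have hi' : v i ∉ v '' t := fun h => hi (M.subset_closure _ (by simp [hM]) h)
    rw [Finset.coe_insert, Set.image_insert_eq]
    refine ⟨(h1.insert_indep_iff_of_notMem hi').2 ⟨by simp [hM], hi⟩, ?_⟩
    rw [Set.encard_insert_of_notMem hi', h2, Finset.card_insert_of_notMem hit]
    rfl

variable {m n : ℕ}

/-- An orderly ranking of the derivatives `δ₁^(e 1) ⋯ δ_m^(e m) (η j)`: by total order first,
then lexicographically. -/
def derivRank (ej : (Fin m → ℕ) × Fin n) : ℕ ×ₗ (Lex (Fin m → ℕ) ×ₗ Fin n) :=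
  toLex (∑ i, ej.1 i, toLex (toLex ej.1, ej.2))

theorem derivRank_injective : Function.Injective (derivRank (m := m) (n := n)) := by
  rintro ⟨e, j⟩ ⟨e', j'⟩ h
  simp only [derivRank, toLex_inj, Prod.mk.injEq] at h ⊢
  exact h.2

theorem sum_le_of_derivRank_lt {ej ej' : (Fin m → ℕ) × Fin n} (h : derivRank ej < derivRank ej') :
    ∑ i, ej.1 i ≤ ∑ i, ej'.1 i := by
  rcases Prod.Lex.toLex_lt_toLex.1 h with h | h
  · exact h.le
  · exact h.1.le

theorem derivRank_add_single_lt {e e' : Fin m → ℕ} {j j' : Fin n} (i : Fin m)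
    (h : derivRank (e, j) < derivRank (e', j')) :
    derivRank (e + Pi.single i 1, j) < derivRank (e' + Pi.single i 1, j') := by
  simp only [derivRank, Prod.Lex.toLex_lt_toLex, sum_add_single, toLex_add, add_lt_add_iff_right,
    add_left_inj] at h ⊢
  exact h

theorem derivRank_lt_add_single (e : Fin m → ℕ) (j : Fin n) (i : Fin m) :
    derivRank (e, j) < derivRank (e + Pi.single i 1, j) := by
  simp only [derivRank, Prod.Lex.toLex_lt_toLex, sum_add_single]
  exact Or.inl (Nat.lt_succ_self _)

end Rank

section Core

open AlgebraicIndependent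

variable {L : Type*} [Field L] {m n n' : ℕ} {δ : Fin m → L → L} {K F : Subfield L}
  {η : Fin n → L} {ξ : Fin n' → L}

theorem eRk_add_eRk_le (hKF : K ≤ F) {A B : Set L} (hA : A ⊆ F) (hB : B.Finite) :
    (matroid K L).eRk A + (matroid F L).eRk B ≤ (matroid K L).eRk (A ∪ B) := by
  obtain ⟨I, hI⟩ := (matroid K L).exists_isBasis A
  obtain ⟨J, hJ⟩ := (matroid F L).exists_isBasis B
  have key : ∀ J' : Set L, J'.Finite → (matroid F L).Indep J' →
      (matroid K L).Indep (I ∪ J') ∧ Disjoint I J' := by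
    intro J' hfin
    induction J', hfin using Set.Finite.induction_on with
    | empty => exact fun _ => by simpa using hI.indep
    | @insert x J' hx _ ih =>
      intro hind
      have hJ' := hind.subset (Set.subset_insert x J')
      obtain ⟨h1, h2⟩ := ih hJ'
      have hxF : x ∉ (matroid F L).closure J' :=
        ((hJ'.insert_indep_iff_of_notMem hx).1 hind).2
      have hxK : x ∉ (matroid K L).closure (I ∪ J') := fun h => hxF <|
        matroid_closure_subset_of_le (fun y hy => Subfield.subset_closure (Or.inl (hKF hy)))
          (Set.union_subset (fun y hy => Subfield.subset_closure (Or.inl (hA (hI.subset hy))))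
            fun y hy => Subfield.subset_closure (Or.inr hy)) h
      have hxI : x ∉ I ∪ J' := fun h => hxK ((matroid K L).subset_closure _ (by simp) h)
      refine ⟨?_, ?_⟩
      · rw [Set.union_insert]
        exact (h1.insert_indep_iff_of_notMem hxI).2 ⟨by simp, hxK⟩
      · exact Set.disjoint_insert_right.2 ⟨fun h => hxI (Or.inl h), h2⟩
  obtain ⟨h1, h2⟩ := key J (hB.subset hJ.subset) hJ.indep
  rw [hI.eRk_eq_encard, hJ.eRk_eq_encard, ← Set.encard_union_eq h2]
  exact h1.encard_le_eRk_of_subset (Set.union_subset_union hI.subset hJ.subset)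

/-- The derivative of the family `ξ` indexed by `ej`. -/
def derivOf (δ : Fin m → L → L) (ξ : Fin n' → L) (ej : (Fin m → ℕ) × Fin n') : L :=
  thetaApply δ ej.1 (ξ ej.2)

/-- The derivatives of the family `ξ` ranked below `ej`. -/
def lowerDerivs (δ : Fin m → L → L) (ξ : Fin n' → L) (ej : (Fin m → ℕ) × Fin n') : Set L :=
  derivOf δ ξ '' {k | derivRank k < derivRank ej}

theorem derivOf_add_mem_closure [CharZero L] (hadd : ∀ i x y, δ i (x + y) = δ i x + δ i y)
    (hleib : ∀ i x y, δ i (x * y) = x * δ i y + δ i x * y)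
    (hcomm : ∀ i j x, δ i (δ j x) = δ j (δ i x)) (hK : IsDiffSubfield δ K)
    {c : ℕ} {e : Fin m → ℕ} {j : Fin n'}
    (h : derivOf δ ξ (e, j) ∈
      (matroid K L).closure (thetaSet δ η c ∪ lowerDerivs δ ξ (e, j))) (f : Fin m → ℕ) :
    derivOf δ ξ (e + f, j) ∈ (matroid K L).closure
      (thetaSet δ η (c + ∑ i, f i) ∪ lowerDerivs δ ξ (e + f, j)) := by
  induction f using exponent_induction with
  | zero => simpa using h
  | add_single f i ih =>
    rw [sum_add_single, ← add_assoc, ← add_assoc]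
    have hd : derivOf δ ξ (e + f + Pi.single i 1, j) =
        toDerivation δ hadd hleib i (derivOf δ ξ (e + f, j)) :=
      thetaApply_add_single hcomm _ _ _
    rw [hd]
    refine derivation_mem_matroid_closure (fun x hx => hK i x hx) ?_ ?_ ih
    · refine Set.Subset.trans (Set.union_subset_union (thetaSet_mono (Nat.le_succ _)) ?_)
        ((matroid K L).subset_closure _ (by simp))
      exact Set.image_mono fun k hk => lt_trans hk (derivRank_lt_add_single _ _ _)
    · intro x hx
      refine (matroid K L).subset_closure _ (by simp) ?_
      rcases hx with hx | ⟨⟨e', j'⟩, hk, rfl⟩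
      · exact Or.inl (map_mem_thetaSet_succ hcomm i hx)
      · exact Or.inr ⟨(e' + Pi.single i 1, j'), derivRank_add_single_lt i hk,
          thetaApply_add_single hcomm _ _ _⟩

theorem exists_mem_closure_thetaSet {S : Set L} {x : L}
    (hF : F ≤ Subfield.closure ((K : Set L) ∪ ⋃ s, thetaSet δ η s))
    (hx : x ∈ (matroid F L).closure S) :
    ∃ c, x ∈ (matroid K L).closure (thetaSet δ η c ∪ S) := by
  have h1 : x ∈ (matroid K L).closure (⋃ c, (thetaSet δ η c ∪ S)) := by
    rw [← Set.iUnion_union]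
    refine matroid_closure_subset_of_le (fun y hy => ?_) (fun y hy => ?_) hx
    · exact Subfield.closure_mono (Set.union_subset_union_right _ Set.subset_union_left) (hF hy)
    · exact Subfield.subset_closure (Or.inr (Or.inr hy))
  obtain ⟨I, hI, hfin, -, hxI⟩ := Matroid.exists_mem_finite_closure_of_mem_closure h1
  have hmono : Monotone fun c => thetaSet δ η c ∪ S :=
    fun c d hcd => Set.union_subset_union_left _ (thetaSet_mono hcd)
  obtain ⟨c, hc⟩ := hmono.directed_le.exists_mem_subset_of_finset_subset_biUnion
    (s := hfin.toFinset) (by simpa using hI)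
  exact ⟨c, (matroid K L).closure_subset_closure (by simpa using hc) hxI⟩

theorem exists_finite_generators (E : Set (Fin m → ℕ)) :
    ∃ T ⊆ E, T.Finite ∧ ∀ e ∈ E, ∃ t ∈ T, t ≤ e := by
  refine ⟨{e | Minimal (· ∈ E) e}, fun e he => he.1, ?_, fun e he => ?_⟩
  · exact (setOfPred_minimal_antichain _).finite_of_partiallyWellOrderedOn
      (Set.isPWO_of_wellQuasiOrderedLE _)
  · obtain ⟨t, hte, ht⟩ := exists_minimal_le_of_wellFoundedLT (· ∈ E) e he
    exact ⟨t, ht, hte⟩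

theorem exists_uniform_closure
    (hF : F ≤ Subfield.closure ((K : Set L) ∪ ⋃ s, thetaSet δ η s)) (ξ : Fin n' → L) :
    ∃ c, ∀ e j, derivOf δ ξ (e, j) ∈ (matroid F L).closure (lowerDerivs δ ξ (e, j)) →
      ∃ t ≤ e, derivOf δ ξ (t, j) ∈
        (matroid K L).closure (thetaSet δ η c ∪ lowerDerivs δ ξ (t, j)) := by
  choose T hTE hTfin hT using fun j : Fin n' => exists_finite_generators
    {e | derivOf δ ξ (e, j) ∈ (matroid F L).closure (lowerDerivs δ ξ (e, j))}
  choose! c hc using fun (j : Fin n') (e : Fin m → ℕ)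
    (he : derivOf δ ξ (e, j) ∈ (matroid F L).closure (lowerDerivs δ ξ (e, j))) =>
      exists_mem_closure_thetaSet hF he
  refine ⟨Finset.univ.sup fun j => (hTfin j).toFinset.sup (c j), fun e j he => ?_⟩
  obtain ⟨t, ht, hte⟩ := hT j e he
  refine ⟨t, hte, (matroid K L).closure_subset_closure
    (Set.union_subset_union_left _ (thetaSet_mono ?_)) (hc j t (hTE j ht))⟩
  exact (Finset.le_sup (f := c j) ((hTfin j).mem_toFinset.2 ht)).trans
    (Finset.le_sup (f := fun j => (hTfin j).toFinset.sup (c j)) (Finset.mem_univ j))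

theorem exists_eRk_union_le [CharZero L] (hadd : ∀ i x y, δ i (x + y) = δ i x + δ i y)
    (hleib : ∀ i x y, δ i (x * y) = x * δ i y + δ i x * y)
    (hcomm : ∀ i j x, δ i (δ j x) = δ j (δ i x)) (hK : IsDiffSubfield δ K)
    (hF : F ≤ Subfield.closure ((K : Set L) ∪ ⋃ s, thetaSet δ η s)) (ξ : Fin n' → L) :
    ∃ c, ∀ s, (matroid K L).eRk (thetaSet δ η s ∪ thetaSet δ ξ s) ≤
      (matroid K L).eRk (thetaSet δ η (s + c)) + (matroid F L).eRk (thetaSet δ ξ s) := by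
  obtain ⟨c, hc⟩ := exists_uniform_closure hF ξ
  refine ⟨c, fun s => ?_⟩
  set P : Set ((Fin m → ℕ) × Fin n') := {k | ∑ i, k.1 i ≤ s ∧
    derivOf δ ξ k ∉ (matroid F L).closure (lowerDerivs δ ξ k)}
  have hPs : derivOf δ ξ '' P ⊆ thetaSet δ ξ s := by
    rintro _ ⟨⟨e, j⟩, hk, rfl⟩
    exact ⟨e, hk.1, j, rfl⟩
  have hspan : ∀ k : (Fin m → ℕ) × Fin n', ∑ i, k.1 i ≤ s →
      derivOf δ ξ k ∈ (matroid K L).closure (thetaSet δ η (s + c) ∪ derivOf δ ξ '' P) := by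
    intro k
    induction k using (InvImage.wf derivRank (wellFounded_lt
      (α := ℕ ×ₗ (Lex (Fin m → ℕ) ×ₗ Fin n')))).induction with
    | _ k ih =>
    obtain ⟨e, j⟩ := k
    intro hs
    by_cases hk : derivOf δ ξ (e, j) ∈ (matroid F L).closure (lowerDerivs δ ξ (e, j))
    · obtain ⟨t, hte, ht⟩ := hc e j hk
      obtain ⟨f, rfl⟩ := exists_add_of_le hte
      have h := derivOf_add_mem_closure hadd hleib hcomm hK ht f
      refine (matroid K L).closure_subset_closure_of_subset_closure ?_ h
      refine Set.union_subset ?_ ?_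
      · refine Set.Subset.trans (Set.Subset.trans (thetaSet_mono ?_) Set.subset_union_left)
          ((matroid K L).subset_closure _ (by simp))
        have : ∑ i, (t + f) i = ∑ i, t i + ∑ i, f i := Finset.sum_add_distrib
        simp only at hs
        omega
      · rintro _ ⟨k', hk', rfl⟩
        exact ih k' hk' ((sum_le_of_derivRank_lt hk').trans hs)
    · exact (matroid K L).subset_closure _ (by simp) (Or.inr ⟨_, ⟨hs, hk⟩, rfl⟩)
  have hPfin : P.Finite := by
    exact ((finite_setOf_sum_le s).prod (Set.finite_univ (α := Fin n'))).subset fun k hk => ⟨hk.1, Set.mem_univ _⟩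
  have hind := Matroid.indep_image_of_notMem_closure_lt (M := matroid F L) (matroid_e F L)
    (v := derivOf δ ξ) derivRank_injective hPfin.toFinset
    (fun k hk => ((hPfin.mem_toFinset).1 hk).2)
  rw [hPfin.coe_toFinset] at hind
  calc (matroid K L).eRk (thetaSet δ η s ∪ thetaSet δ ξ s)
      ≤ (matroid K L).eRk
          ((matroid K L).closure (thetaSet δ η (s + c) ∪ derivOf δ ξ '' P)) := by
        refine (matroid K L).eRk_mono (Set.union_subset ?_ ?_)
        · exact Set.Subset.trans (Set.Subset.trans (thetaSet_mono (Nat.le_add_right s c))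
            Set.subset_union_left) ((matroid K L).subset_closure _ (by simp))
        · rintro _ ⟨e, he, j, rfl⟩
          exact hspan (e, j) he
    _ ≤ (matroid K L).eRk (thetaSet δ η (s + c)) + (derivOf δ ξ '' P).encard := by
        rw [Matroid.eRk_closure_eq]
        exact (matroid K L).eRk_union_le_eRk_add_encard _ _
    _ ≤ _ := by
        gcongr
        exact hind.1.encard_le_eRk_of_subset hPs

end Core

section Growth

variable {p q r f g : ℚ[X]}

theorem leadingCoeff_pos_of_eventually_nonneg (hf : f ≠ 0)
    (h : ∃ s₀ : ℕ, ∀ s : ℕ, s₀ ≤ s → 0 ≤ f.eval (s : ℚ)) : 0 < f.leadingCoeff := by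
  obtain ⟨s₀, h⟩ := h
  by_contra! hlc
  rcases lt_or_ge 0 f.degree with hd | hd
  · have ht := (f.tendsto_atBot_of_leadingCoeff_nonpos hd hlc).comp
      (tendsto_natCast_atTop_atTop (R := ℚ))
    obtain ⟨s, hs, hs'⟩ :=
      ((ht.eventually_lt_atBot 0).and (Filter.eventually_ge_atTop s₀)).exists
    exact absurd (h s hs') (not_le.2 hs)
  · rw [eq_C_of_degree_le_zero hd] at h hlc hf
    have := h s₀ le_rfl
    simp only [eval_C, leadingCoeff_C] at this hlc
    exact hf (by rw [le_antisymm hlc this, C_0])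

theorem degree_le_of_eventually_le (h : ∃ s₀ : ℕ, ∀ s : ℕ, s₀ ≤ s →
    0 ≤ f.eval (s : ℚ) ∧ f.eval (s : ℚ) ≤ g.eval (s : ℚ)) : f.degree ≤ g.degree := by
  obtain ⟨s₀, h⟩ := h
  by_contra! hlt
  have hf : f ≠ 0 := by
    rintro rfl
    simp at hlt
  have hpos := leadingCoeff_pos_of_eventually_nonneg hf ⟨s₀, fun s hs => (h s hs).1⟩
  have hlc := leadingCoeff_sub_of_degree_lt' hlt
  have hne : g - f ≠ 0 := by
    rw [← leadingCoeff_ne_zero, hlc]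
    exact neg_ne_zero.2 hpos.ne'
  have := leadingCoeff_pos_of_eventually_nonneg hne
    ⟨s₀, fun s hs => by rw [eval_sub]; exact sub_nonneg.2 (h s hs).2⟩
  rw [hlc] at this
  linarith

theorem degree_eq_and_leadingCoeff_eq_of_shift_bounds (hdeg : q.degree = r.degree) {c s₀ : ℕ}
    (hq : ∀ s : ℕ, s₀ ≤ s → 0 ≤ q.eval (s : ℚ)) (hr : ∀ s : ℕ, s₀ ≤ s → 0 ≤ r.eval (s : ℚ))
    (hlow : ∀ s : ℕ, s₀ ≤ s → q.eval (s : ℚ) + r.eval (s : ℚ) ≤ p.eval (s : ℚ))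
    (hupp : ∀ s : ℕ, s₀ ≤ s →
      p.eval (s : ℚ) ≤ q.eval ((s + c : ℕ) : ℚ) + r.eval (s : ℚ)) :
    p.degree = q.degree ∧ p.leadingCoeff = q.leadingCoeff + r.leadingCoeff := by
  have hbound : (p - (q + r)).degree ≤ (taylor (c : ℚ) q - q).degree := by
    refine degree_le_of_eventually_le ⟨s₀, fun s hs => ?_⟩
    have h1 := hlow s hs
    have h2 := hupp s hs
    push_cast at h2
    simp only [eval_sub, eval_add, taylor_eval]
    constructor <;> linarith
  rcases eq_or_ne q 0 with rfl | hq0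
  · have hr0 : r = 0 := by simpa using hdeg.symm
    subst hr0
    have hp0 : p = 0 := by simpa using hbound
    simp [hp0]
  · have hr0 : r ≠ 0 := fun h => hq0 (by simpa [h] using hdeg)
    have hqpos := leadingCoeff_pos_of_eventually_nonneg hq0 ⟨s₀, hq⟩
    have hrpos := leadingCoeff_pos_of_eventually_nonneg hr0 ⟨s₀, hr⟩
    have hlc : (q + r).leadingCoeff = q.leadingCoeff + r.leadingCoeff :=
      leadingCoeff_add_of_degree_eq hdeg (by positivity)
    have hd : (q + r).degree = q.degree := by
      rw [degree_add_eq_of_leadingCoeff_add_ne_zero (by positivity), ← hdeg, max_self]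
    have hlt : (p - (q + r)).degree < (q + r).degree := by
      rw [hd, ← degree_taylor q (c : ℚ)]
      refine hbound.trans_lt (degree_sub_lt_left (degree_taylor _ _) ?_ (leadingCoeff_taylor _ _))
      rwa [Ne, taylor_eq_zero]
    have hp : p = (p - (q + r)) + (q + r) := by ring
    rw [hp, degree_add_eq_right_of_degree_lt hlt, leadingCoeff_add_of_degree_lt hlt]
    exact ⟨hd, hlc⟩

end Growth

/-- If `τ(a/K) = τ(b/K⟨a⟩)` then `τ((a,b)/K) = τ(a/K)` and the typical differential dimensions
add: `α((a,b)/K) = α(a/K) + α(b/K⟨a⟩)`. -/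
theorem typical_dimension_add_of_eq_type
    {L : Type*} [Field L] [CharZero L] {m : ℕ} (hm : 1 ≤ m)
    (δ : Fin m → L → L)
    (hadd : ∀ i : Fin m, ∀ x y : L, δ i (x + y) = δ i x + δ i y)
    (hleib : ∀ i : Fin m, ∀ x y : L, δ i (x * y) = x * δ i y + δ i x * y)
    (hcomm : ∀ i j : Fin m, ∀ x : L, δ i (δ j x) = δ j (δ i x))
    (K : Subfield L) (hK : IsDiffSubfield δ K)
    {n₁ n₂ : ℕ} (a : Fin n₁ → L) (b : Fin n₂ → L)
    (p q r : ℚ[X])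
    (hp : IsKolchinPoly δ K (Fin.append a b) p)
    (hq : IsKolchinPoly δ K a q)
    (hr : IsKolchinPoly δ (diffAdjoin δ K (Set.range a)) b r)
    (hdeg : q.degree = r.degree) :
    p.degree = q.degree ∧
      (p.natDegree.factorial : ℚ) * p.leadingCoeff =
        (q.natDegree.factorial : ℚ) * q.leadingCoeff +
          (r.natDegree.factorial : ℚ) * r.leadingCoeff := by
  obtain ⟨sp, hp⟩ := hp
  obtain ⟨sq, hq⟩ := hq
  obtain ⟨sr, hr⟩ := hr
  set F := diffAdjoin δ K (Set.range a)
  obtain ⟨c, hc⟩ := exists_eRk_union_le hadd hleib hcomm hK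
    (diffAdjoin_le_closure (η := a) hadd hleib hcomm hK) b
  have hupp : ∀ s, diffTrdeg δ K (Fin.append a b) s ≤
      diffTrdeg δ K a (s + c) + diffTrdeg δ F b s := fun s => by
    have := hc s
    rw [← thetaSet_append, ← diffTrdeg_eq_eRk, ← diffTrdeg_eq_eRk, ← diffTrdeg_eq_eRk] at this
    exact_mod_cast this
  have hlow : ∀ s, diffTrdeg δ K a s + diffTrdeg δ F b s ≤
      diffTrdeg δ K (Fin.append a b) s := fun s => by
    have := eRk_add_eRk_le (le_diffAdjoin (δ := δ) (K := K) (Set.range a))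
      (thetaSet_subset_diffAdjoin hcomm s) (thetaSet_finite (δ := δ) (η := b) s)
    rw [← thetaSet_append, ← diffTrdeg_eq_eRk, ← diffTrdeg_eq_eRk, ← diffTrdeg_eq_eRk] at this
    exact_mod_cast this
  obtain ⟨hd, hlc⟩ := degree_eq_and_leadingCoeff_eq_of_shift_bounds (p := p) hdeg (c := c)
    (s₀ := max sp (max sq sr))
    (fun s hs => by rw [hq s (by omega)]; positivity)
    (fun s hs => by rw [hr s (by omega)]; positivity)
    (fun s hs => by
      rw [hp s (by omega), hq s (by omega), hr s (by omega)]
      exact_mod_cast hlow s)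
    (fun s hs => by
      rw [hp s (by omega), hq (s + c) (by omega), hr s (by omega)]
      exact_mod_cast hupp s)
  refine ⟨hd, ?_⟩
  rw [hlc, natDegree_eq_natDegree hd, ← natDegree_eq_natDegree hdeg, mul_add]
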